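/- Unique factorization of set partitions into indivisible ones (freeness of WSym): every set partition π of {1,…,n} (n ≥ 0) can be written in exactly one way as π = π_1 ⊎ π_2 ⊎ ⋯ ⊎ π_k, where k ≥ 0, each π_i is an indivisible set partition of some {1,…,n_i} with n_i ≥ 1, and n_1 + ⋯ + n_k = n. -/

import Mathlib

/-!
Call `d` a cut of a set partition `π` of `{1,…,n}` if every block of `π` lies in `{1,…,d}` or
avoids it. If `d ≤ n` is a cut, then `π = π' ⊎ π''` for a set partition `π'` of `{1,…,d}` and a
set partition `π''` of `{1,…,n-d}` (`exists_split`). Conversely, in any such decomposition `d` is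
a cut, `π'` consists of the blocks of `π` contained in `{1,…,d}`, and `π''` is determined by the
other blocks (`isCut_shiftedUnion`, `shiftedUnion_inj`). Thus `π` is indivisible exactly when it
has no cut strictly between `0` and `n`.

Existence: splitting at the least positive cut makes the first factor indivisible, since any cut
of that factor below its size is a cut of `π`; strong induction on `n` then handles the second
factor.
Uniqueness: if `π` had two factorizations with first factors of different sizes `d < d'`, the cut
`d` of `π` would also be a cut of the first factor of size `d'`, contradicting its
indivisibility. So the first factors have the same size, hence coincide, and so do the remainders.
-/

/-- A set partition of `{1,…,n}` (as a finite collection of pairwise disjoint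
nonempty finsets of positive integers whose union is `{1,…,n}`). -/
def IsPartitionOf (n : ℕ) (π : Finset (Finset ℕ)) : Prop :=
  (∀ B ∈ π, B.Nonempty) ∧
  (∀ B ∈ π, ∀ C ∈ π, B ≠ C → B ∩ C = ∅) ∧
  π.sup id = Finset.Icc 1 n

/-- The blocks of `π` with every element increased by `n`. -/
def shiftBlocks (n : ℕ) (π : Finset (Finset ℕ)) : Finset (Finset ℕ) :=
  π.image fun B => B.image (· + n)

/-- The shifted union `π ⊎ π'`, where `π` is a set partition of `{1,…,n}`. -/
def shiftedUnion (n : ℕ) (π π' : Finset (Finset ℕ)) : Finset (Finset ℕ) :=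
  π ∪ shiftBlocks n π'

/-- A set partition `π` of `{1,…,n}`, `n ≥ 1`, is indivisible if whenever
`π = π' ⊎ π''` with `π'` a set partition of `{1,…,n'}` and `π''` of `{1,…,n''}`,
`n' + n'' = n`, one has `n' = 0` or `n'' = 0`. -/
def Indivisible (n : ℕ) (π : Finset (Finset ℕ)) : Prop :=
  1 ≤ n ∧ IsPartitionOf n π ∧
  ∀ n' n'' (π' π'' : Finset (Finset ℕ)),
    IsPartitionOf n' π' → IsPartitionOf n'' π'' → n' + n'' = n →
    π = shiftedUnion n' π' π'' → n' = 0 ∨ n'' = 0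

/-- Iterated shifted union `π_1 ⊎ π_2 ⊎ ⋯ ⊎ π_k` of a list of pairs
`(n_i, π_i)` where `π_i` is a set partition of `{1,…,n_i}`. -/
def concatParts : List (ℕ × Finset (Finset ℕ)) → Finset (Finset ℕ)
  | [] => ∅
  | (m, π) :: rest => shiftedUnion m π (concatParts rest)

/-! ### Shifted unions of set partitions -/

/-- `d` is a cut of `π`: no block of `π` has elements on both sides of the gap between `d` and
`d + 1`. -/
def IsCut (d : ℕ) (π : Finset (Finset ℕ)) : Prop :=
  ∀ B ∈ π, (∀ x ∈ B, x ≤ d) ∨ (∀ x ∈ B, d < x)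

/-- Elementwise form of the definition: blocks sharing an element are equal, and the elements
covered are exactly `1,…,n`. -/
theorem isPartitionOf_iff (n : ℕ) (π : Finset (Finset ℕ)) :
    IsPartitionOf n π ↔ (∀ B ∈ π, B.Nonempty) ∧
      (∀ B ∈ π, ∀ C ∈ π, ∀ x, x ∈ B → x ∈ C → B = C) ∧
      ∀ x, (∃ B ∈ π, x ∈ B) ↔ 1 ≤ x ∧ x ≤ n := by
  unfold IsPartitionOf
  refine and_congr Iff.rfl (and_congr ?_ ?_)
  · refine forall₄_congr fun B _ C _ => ?_
    constructor
    · intro h x hB hC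
      by_contra hne
      have := Finset.mem_inter.2 ⟨hB, hC⟩
      rw [h hne] at this
      simp at this
    · intro h hne
      ext x
      simp only [Finset.mem_inter, Finset.notMem_empty, iff_false]
      exact fun hx => hne (h x hx.1 hx.2)
  · rw [Finset.ext_iff]
    refine forall_congr' fun x => ?_
    simp [Finset.mem_sup]

theorem mem_shiftBlocks {n : ℕ} {π : Finset (Finset ℕ)} {B : Finset ℕ} :
    B ∈ shiftBlocks n π ↔ ∃ C ∈ π, C.image (· + n) = B := by
  simp [shiftBlocks]

theorem mem_shiftedUnion {n : ℕ} {π π' : Finset (Finset ℕ)} {B : Finset ℕ} :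
    B ∈ shiftedUnion n π π' ↔ B ∈ π ∨ ∃ C ∈ π', C.image (· + n) = B := by
  simp [shiftedUnion, mem_shiftBlocks]

theorem IsPartitionOf.mem_bounds {n : ℕ} {π : Finset (Finset ℕ)} (h : IsPartitionOf n π)
    {B : Finset ℕ} (hB : B ∈ π) {x : ℕ} (hx : x ∈ B) : 1 ≤ x ∧ x ≤ n :=
  (((isPartitionOf_iff n π).1 h).2.2 x).1 ⟨B, hB, hx⟩

theorem isPartitionOf_zero_iff {π : Finset (Finset ℕ)} : IsPartitionOf 0 π ↔ π = ∅ := by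
  constructor
  · intro h
    refine Finset.eq_empty_of_forall_notMem fun B hB => ?_
    obtain ⟨x, hx⟩ := h.1 B hB
    have := h.mem_bounds hB hx
    omega
  · rintro rfl
    simp [IsPartitionOf]

theorem gt_of_mem_shiftBlocks {d e : ℕ} {π : Finset (Finset ℕ)} (h : IsPartitionOf e π)
    {B : Finset ℕ} (hB : B ∈ shiftBlocks d π) {x : ℕ} (hx : x ∈ B) : d < x := by
  obtain ⟨C, hC, rfl⟩ := mem_shiftBlocks.1 hB
  obtain ⟨y, hy, rfl⟩ := Finset.mem_image.1 hx
  have := h.mem_bounds hC hy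
  omega

theorem isPartitionOf_shiftedUnion {d e : ℕ} {π' π'' : Finset (Finset ℕ)}
    (h' : IsPartitionOf d π') (h'' : IsPartitionOf e π'') :
    IsPartitionOf (d + e) (shiftedUnion d π' π'') := by
  have b' := @h'.mem_bounds
  have b'' := @h''.mem_bounds
  rw [isPartitionOf_iff] at *
  obtain ⟨ne', dj', cv'⟩ := h'
  obtain ⟨ne'', dj'', cv''⟩ := h''
  refine ⟨?_, ?_, ?_⟩
  · intro B hB
    obtain hB | ⟨C, hC, rfl⟩ := mem_shiftedUnion.1 hB
    · exact ne' B hB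
    · exact (ne'' C hC).image _
  · intro B hB C hC x hxB hxC
    obtain hB' | ⟨B', hB', rfl⟩ := mem_shiftedUnion.1 hB <;>
      obtain hC' | ⟨C', hC', rfl⟩ := mem_shiftedUnion.1 hC
    · exact dj' B hB' C hC' x hxB hxC
    · obtain ⟨y, hy, rfl⟩ := Finset.mem_image.1 hxC
      have h1 := b' hB' hxB
      have h2 := b'' hC' hy
      omega
    · obtain ⟨y, hy, rfl⟩ := Finset.mem_image.1 hxB
      have h1 := b' hC' hxC
      have h2 := b'' hB' hy
      omega
    · obtain ⟨y, hy, rfl⟩ := Finset.mem_image.1 hxB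
      obtain ⟨z, hz, hzy⟩ := Finset.mem_image.1 hxC
      obtain rfl : z = y := by simpa using hzy
      rw [dj'' B' hB' C' hC' z hy hz]
  · intro x
    constructor
    · rintro ⟨B, hB, hx⟩
      obtain hB | ⟨C, hC, rfl⟩ := mem_shiftedUnion.1 hB
      · have := b' hB hx
        omega
      · obtain ⟨y, hy, rfl⟩ := Finset.mem_image.1 hx
        have := b'' hC hy
        omega
    · rintro ⟨h1, h2⟩
      by_cases hx : x ≤ d
      · obtain ⟨B, hB, hxB⟩ := (cv' x).2 ⟨h1, hx⟩
        exact ⟨B, mem_shiftedUnion.2 (Or.inl hB), hxB⟩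
      · obtain ⟨B, hB, hxB⟩ := (cv'' (x - d)).2 (by omega)
        exact ⟨_, mem_shiftedUnion.2 (Or.inr ⟨B, hB, rfl⟩),
          Finset.mem_image.2 ⟨x - d, hxB, by omega⟩⟩

/-! ### Cuts and decompositions -/

theorem isCut_shiftedUnion {d e : ℕ} {π' π'' : Finset (Finset ℕ)}
    (h' : IsPartitionOf d π') (h'' : IsPartitionOf e π'') :
    IsCut d (shiftedUnion d π' π'') := by
  intro B hB
  rcases Finset.mem_union.1 hB with hB | hB
  · exact Or.inl fun x hx => (h'.mem_bounds hB hx).2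
  · exact Or.inr fun x hx => gt_of_mem_shiftBlocks h'' hB hx

/-- Every cut `d ≤ n` comes from a decomposition into set partitions of `{1,…,d}` and
`{1,…,n-d}`. -/
theorem exists_split {n d : ℕ} {π : Finset (Finset ℕ)} (h : IsPartitionOf n π) (hd : d ≤ n)
    (hc : IsCut d π) : ∃ π' π'', IsPartitionOf d π' ∧ IsPartitionOf (n - d) π'' ∧
      π = shiftedUnion d π' π'' := by
  have b := @h.mem_bounds
  rw [isPartitionOf_iff] at h
  obtain ⟨ne, dj, cv⟩ := h
  have shift_back : ∀ B : Finset ℕ, (∀ x ∈ B, d < x) →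
      (B.image (· - d)).image (· + d) = B := by
    intro B hB
    rw [Finset.image_image]
    conv_rhs => rw [← Finset.image_id (s := B)]
    refine Finset.image_congr fun x hx => ?_
    have := hB x hx
    simp only [Function.comp, id]
    omega
  refine ⟨π.filter fun B => ∀ x ∈ B, x ≤ d,
    (π.filter fun B => ∀ x ∈ B, d < x).image fun B => B.image (· - d), ?_, ?_, ?_⟩
  · rw [isPartitionOf_iff]
    simp only [Finset.mem_filter]
    refine ⟨fun B hB => ne B hB.1, fun B hB C hC => dj B hB.1 C hC.1, fun x => ?_⟩
    constructor
    · rintro ⟨B, ⟨hB, hle⟩, hx⟩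
      exact ⟨(b hB hx).1, hle x hx⟩
    · rintro ⟨h1, h2⟩
      obtain ⟨B, hB, hx⟩ := (cv x).2 ⟨h1, h2.trans hd⟩
      refine ⟨B, ⟨hB, (hc B hB).resolve_right fun hgt => ?_⟩, hx⟩
      have := hgt x hx
      omega
  · rw [isPartitionOf_iff]
    simp only [Finset.mem_image, Finset.mem_filter]
    refine ⟨?_, ?_, fun x => ?_⟩
    · rintro _ ⟨B, hB, rfl⟩
      exact (ne B hB.1).image _
    · rintro _ ⟨B, hB, rfl⟩ _ ⟨C, hC, rfl⟩ x hxB hxC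
      obtain ⟨y, hy, rfl⟩ := Finset.mem_image.1 hxB
      obtain ⟨z, hz, hzy⟩ := Finset.mem_image.1 hxC
      have h1 := hB.2 y hy
      have h2 := hC.2 z hz
      obtain rfl : z = y := by omega
      rw [dj B hB.1 C hC.1 z hy hz]
    · constructor
      · rintro ⟨_, ⟨B, ⟨hB, hgt⟩, rfl⟩, hx⟩
        obtain ⟨y, hy, rfl⟩ := Finset.mem_image.1 hx
        have h1 := hgt y hy
        have h2 := b hB hy
        omega
      · rintro ⟨h1, h2⟩
        obtain ⟨B, hB, hx⟩ := (cv (x + d)).2 (by omega)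
        refine ⟨_, ⟨B, ⟨hB, (hc B hB).resolve_left fun hle => ?_⟩, rfl⟩,
          Finset.mem_image.2 ⟨x + d, hx, by simp⟩⟩
        have := hle _ hx
        omega
  · ext B
    rw [mem_shiftedUnion]
    simp only [Finset.mem_image, Finset.mem_filter]
    constructor
    · intro hB
      rcases hc B hB with hle | hgt
      · exact Or.inl ⟨hB, hle⟩
      · exact Or.inr ⟨_, ⟨B, ⟨hB, hgt⟩, rfl⟩, shift_back B hgt⟩
    · rintro (hB | ⟨_, ⟨C, hC, rfl⟩, rfl⟩)
      · exact hB.1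
      · rw [shift_back C hC.2]
        exact hC.1

/-- The first factor is recovered from a shifted union as the blocks bounded by `d`. -/
theorem mem_left_iff {d e : ℕ} {π' π'' : Finset (Finset ℕ)}
    (h' : IsPartitionOf d π') (h'' : IsPartitionOf e π'') (B : Finset ℕ) :
    B ∈ π' ↔ B ∈ shiftedUnion d π' π'' ∧ ∀ x ∈ B, x ≤ d := by
  refine ⟨fun hB => ⟨Finset.mem_union_left _ hB, fun x hx => (h'.mem_bounds hB hx).2⟩, ?_⟩
  rintro ⟨hB, hle⟩
  refine (Finset.mem_union.1 hB).resolve_right fun hB' => ?_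
  obtain ⟨x, hx⟩ := (isPartitionOf_shiftedUnion h' h'').1 B hB
  have h1 := gt_of_mem_shiftBlocks h'' hB' hx
  have h2 := hle x hx
  omega

/-- The shifted second factor is recovered from a shifted union as the blocks beyond `d`. -/
theorem mem_shiftBlocks_iff {d e : ℕ} {π' π'' : Finset (Finset ℕ)}
    (h' : IsPartitionOf d π') (h'' : IsPartitionOf e π'') (B : Finset ℕ) :
    B ∈ shiftBlocks d π'' ↔ B ∈ shiftedUnion d π' π'' ∧ ∀ x ∈ B, d < x := by
  refine ⟨fun hB => ⟨Finset.mem_union_right _ hB, fun x hx => gt_of_mem_shiftBlocks h'' hB hx⟩, ?_⟩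
  rintro ⟨hB, hgt⟩
  refine (Finset.mem_union.1 hB).resolve_left fun hB' => ?_
  obtain ⟨x, hx⟩ := h'.1 B hB'
  have h1 := h'.mem_bounds hB' hx
  have h2 := hgt x hx
  omega

theorem shiftBlocks_injective (d : ℕ) : Function.Injective (shiftBlocks d) :=
  Finset.image_injective (Finset.image_injective (add_left_injective d))

theorem shiftedUnion_inj {d e f : ℕ} {A C A' C' : Finset (Finset ℕ)}
    (hA : IsPartitionOf d A) (hC : IsPartitionOf e C)
    (hA' : IsPartitionOf d A') (hC' : IsPartitionOf f C')
    (h : shiftedUnion d A C = shiftedUnion d A' C') : A = A' ∧ C = C' := by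
  constructor
  · ext B
    rw [mem_left_iff hA hC, mem_left_iff hA' hC', h]
  · apply shiftBlocks_injective d
    ext B
    rw [mem_shiftBlocks_iff hA hC, mem_shiftBlocks_iff hA' hC', h]

theorem Indivisible.not_isCut {n d : ℕ} {π : Finset (Finset ℕ)} (h : Indivisible n π)
    (h0 : 0 < d) (hn : d < n) : ¬ IsCut d π := by
  intro hc
  obtain ⟨π', π'', h', h'', heq⟩ := exists_split h.2.1 hn.le hc
  have := h.2.2 d (n - d) π' π'' h' h'' (by omega) heq
  omega

/-- Among the first factors of positive size of one partition, an indivisible one has the least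
size. -/
theorem first_size_le {d d' e : ℕ} {A C A' C' : Finset (Finset ℕ)}
    (hA : IsPartitionOf d A) (hC : IsPartitionOf e C) (hd : 0 < d) (hA' : Indivisible d' A')
    (h : shiftedUnion d A C = shiftedUnion d' A' C') : d' ≤ d := by
  by_contra hlt
  refine hA'.not_isCut hd (not_le.1 hlt) fun B hB => isCut_shiftedUnion hA hC B ?_
  rw [h]
  exact Finset.mem_union_left _ hB

/-! ### Uniqueness -/

theorem isPartitionOf_concatParts (L : List (ℕ × Finset (Finset ℕ)))
    (hL : ∀ p ∈ L, Indivisible p.1 p.2) :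
    IsPartitionOf (L.map Prod.fst).sum (concatParts L) := by
  induction L with
  | nil => exact isPartitionOf_zero_iff.2 rfl
  | cons p L ih =>
    rw [List.map_cons, List.sum_cons]
    exact isPartitionOf_shiftedUnion (hL p (by simp)).2.1
      (ih fun q hq => hL q (List.mem_cons_of_mem _ hq))

theorem concatParts_cons_ne_empty (p : ℕ × Finset (Finset ℕ)) (L : List (ℕ × Finset (Finset ℕ)))
    (hp : Indivisible p.1 p.2) : concatParts (p :: L) ≠ ∅ := by
  intro h
  obtain ⟨B, hB, -⟩ := (((isPartitionOf_iff _ _).1 hp.2.1).2.2 1).2 ⟨le_rfl, hp.1⟩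
  have : B ∈ concatParts (p :: L) := Finset.mem_union_left _ hB
  simp [h] at this

theorem concatParts_injOn (L L' : List (ℕ × Finset (Finset ℕ)))
    (hL : ∀ p ∈ L, Indivisible p.1 p.2) (hL' : ∀ p ∈ L', Indivisible p.1 p.2)
    (h : concatParts L = concatParts L') : L = L' := by
  induction L generalizing L' with
  | nil =>
    cases L' with
    | nil => rfl
    | cons q L' => exact absurd h.symm (concatParts_cons_ne_empty q L' (hL' q (by simp)))
  | cons p L ih =>
    cases L' with
    | nil => exact absurd h (concatParts_cons_ne_empty p L (hL p (by simp)))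
    | cons q L' =>
      have hp := hL p (by simp)
      have hq := hL' q (by simp)
      have tL : ∀ r ∈ L, Indivisible r.1 r.2 := fun r hr => hL r (List.mem_cons_of_mem _ hr)
      have tL' : ∀ r ∈ L', Indivisible r.1 r.2 := fun r hr => hL' r (List.mem_cons_of_mem _ hr)
      have cL := isPartitionOf_concatParts L tL
      have cL' := isPartitionOf_concatParts L' tL'
      obtain ⟨d, A⟩ := p
      obtain ⟨d', A'⟩ := q
      have h2 : shiftedUnion d A (concatParts L) = shiftedUnion d' A' (concatParts L') := h
      obtain rfl : d = d' := le_antisymm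
        (first_size_le hq.2.1 cL' hq.1 hp h2.symm) (first_size_le hp.2.1 cL hp.1 hq h2)
      obtain ⟨rfl, hC⟩ := shiftedUnion_inj hp.2.1 cL hq.2.1 cL' h2
      rw [ih L' tL tL' hC]

/-! ### Existence -/

/-- Splitting at the least positive cut yields an indivisible first factor. -/
theorem exists_indivisible_split {n : ℕ} {π : Finset (Finset ℕ)} (h : IsPartitionOf n π)
    (hn : 0 < n) : ∃ d ≤ n, ∃ A C, Indivisible d A ∧ IsPartitionOf (n - d) C ∧
      π = shiftedUnion d A C := by
  classical
  have hex : ∃ d, 0 < d ∧ IsCut d π :=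
    ⟨n, hn, fun B hB => Or.inl fun x hx => (h.mem_bounds hB hx).2⟩
  obtain ⟨d, ⟨hd0, hdc⟩, hmin⟩ : ∃ d, (0 < d ∧ IsCut d π) ∧
      ∀ m < d, ¬ (0 < m ∧ IsCut m π) :=
    ⟨Nat.find hex, Nat.find_spec hex, fun m hm => Nat.find_min hex hm⟩
  have hdn : d ≤ n := by
    by_contra hlt
    exact hmin n (not_le.1 hlt)
      ⟨hn, fun B hB => Or.inl fun x hx => (h.mem_bounds hB hx).2⟩
  obtain ⟨A, C, hA, hC, heq⟩ := exists_split h hdn hdc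
  refine ⟨d, hdn, A, C, ⟨hd0, hA, ?_⟩, hC, heq⟩
  intro n' n'' π' π'' h' h'' hsum hAeq
  by_contra hne
  refine hmin n' (by omega) ⟨by omega, fun B hB => ?_⟩
  rw [heq] at hB
  rcases Finset.mem_union.1 hB with hB | hB
  · rw [hAeq] at hB
    exact isCut_shiftedUnion h' h'' B hB
  · refine Or.inr fun x hx => ?_
    have := gt_of_mem_shiftBlocks hC hB hx
    omega

theorem exists_factorization (n : ℕ) (π : Finset (Finset ℕ)) (hπ : IsPartitionOf n π) :
    ∃ L : List (ℕ × Finset (Finset ℕ)), (∀ p ∈ L, Indivisible p.1 p.2) ∧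
      (L.map Prod.fst).sum = n ∧ concatParts L = π := by
  induction n using Nat.strong_induction_on generalizing π with
  | _ n ih =>
    rcases Nat.eq_zero_or_pos n with rfl | hn
    · exact ⟨[], by simp, rfl, (isPartitionOf_zero_iff.1 hπ).symm⟩
    · obtain ⟨d, hdn, A, C, hA, hC, rfl⟩ := exists_indivisible_split hπ hn
      have hd := hA.1
      obtain ⟨L, hL, hs, rfl⟩ := ih (n - d) (by omega) C hC
      refine ⟨(d, A) :: L, ?_, ?_, rfl⟩
      · intro p hp
        rcases List.mem_cons.1 hp with rfl | hp
        · exact hA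
        · exact hL p hp
      · rw [List.map_cons, List.sum_cons, hs]
        exact Nat.add_sub_cancel' hdn

/-- Unique factorization of set partitions into indivisible ones (freeness of
`WSym`): every set partition of `{1,…,n}` can be written in exactly one way as
`π_1 ⊎ ⋯ ⊎ π_k` with each `π_i` an indivisible set partition of `{1,…,n_i}`,
`n_i ≥ 1`, and `n_1 + ⋯ + n_k = n`. -/
theorem unique_factorization_partitions (n : ℕ) (π : Finset (Finset ℕ))
    (hπ : IsPartitionOf n π) :
    ∃! L : List (ℕ × Finset (Finset ℕ)),
      (∀ p ∈ L, Indivisible p.1 p.2) ∧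
      (L.map Prod.fst).sum = n ∧
      concatParts L = π := by
  obtain ⟨L, hL, hs, hc⟩ := exists_factorization n π hπ
  exact ⟨L, ⟨hL, hs, hc⟩, fun L' h => concatParts_injOn L' L h.1 hL (h.2.2.trans hc.symm)⟩
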